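/- Let P be as in the context and let f ∈ C_0^∞(ℝ). If f̃ and f̌ are two almost holomorphic extensions of f, then the functions z ↦ (∂f̃/∂z̄)(z)·(z·1 − P)⁻¹ and z ↦ (∂f̌/∂z̄)(z)·(z·1 − P)⁻¹ (defined as 0 for z ∈ ℝ) are Bochner integrable on ℂ with respect to Lebesgue measure L(dz), and −(1/π)∫_ℂ (∂f̃/∂z̄)(z)(z·1 − P)⁻¹ L(dz) = −(1/π)∫_ℂ (∂f̌/∂z̄)(z)(z·1 − P)⁻¹ L(dz). -/

import Mathlib

open MeasureTheory Complex Real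

noncomputable section

/-- The Cauchy–Riemann operator `∂F/∂z̄ = (∂F/∂x + i ∂F/∂y)/2`. -/
def dbar (F : ℂ → ℂ) (z : ℂ) : ℂ :=
  (fderiv ℝ F z 1 + Complex.I * fderiv ℝ F z Complex.I) / 2

/-- `F` is an almost holomorphic extension of `f ∈ C_0^∞(ℝ)`. -/
def IsAHExt (f : ℝ → ℂ) (F : ℂ → ℂ) : Prop :=
  ContDiff ℝ (⊤ : ℕ∞) F ∧ HasCompactSupport F ∧ (∀ x : ℝ, F x = f x) ∧
    ∀ N : ℕ, ∃ C : ℝ, ∀ z : ℂ, ‖dbar F z‖ ≤ C * |z.im| ^ N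

/-- The resolvent `(z·1 − P)⁻¹` (equal to `0` when `z·1 − P` is not invertible). -/
def res {B : Type*} [NormedAddCommGroup B] [NormedSpace ℂ B] (P : B →L[ℂ] B) (z : ℂ) :
    B →L[ℂ] B := Ring.inverse (z • (1 : B →L[ℂ] B) - P)

/-- The spectrum of `P` is real. -/
def RealSpectrum {B : Type*} [NormedAddCommGroup B] [NormedSpace ℂ B]
    (P : B →L[ℂ] B) : Prop := ∀ z ∈ spectrum ℂ P, z.im = 0

/-- The resolvent of `P` has locally temperate growth near `ℝ`. -/
def TemperateResolventLoc {B : Type*} [NormedAddCommGroup B] [NormedSpace ℂ B]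
    (P : B →L[ℂ] B) : Prop :=
  ∀ R > (0:ℝ), ∃ C N : ℝ, 0 ≤ C ∧ 0 ≤ N ∧ ∀ z : ℂ, z.im ≠ 0 → ‖z‖ ≤ R →
    ‖res P z‖ ≤ C * |z.im| ^ (-N)

/-!
Let `H = F - G`, so that `H` vanishes on `ℝ` and `∂H/∂z̄` is flat there, i.e. `O(|Im z| ^ N)` for
every `N`. Then `H` itself is flat: interpolating between `g` and its second derivatives shows that
`∂g/∂x` is flat when `g` is, so `∂H/∂x` satisfies the same hypotheses as `H`. If
`∂H/∂x = O(|Im z| ^ N)`, then the same holds for `∂H/∂y = i ∂H/∂x - 2i ∂H/∂z̄`, and integrating from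
the real axis in the direction of `y` gives `H = O(|Im z| ^ (N + 1))`.

Flatness beats the temperate growth of the holomorphic function `S = (z - P)⁻¹`, so `H S`, extended
by zero to `ℝ`, is differentiable on all of `ℂ` with compact support, and
`∂(H S)/∂z̄ = (∂H/∂z̄) S`. The integral of the latter vanishes by Green's formula.
-/

section CauchyRiemannOperator

variable {F G : ℂ → ℂ} {z : ℂ}

lemma dbar_sub (hF : Differentiable ℝ F) (hG : Differentiable ℝ G) :
    dbar (F - G) = dbar F - dbar G := by
  funext z
  simp only [dbar, fderiv_sub (hF z) (hG z), Pi.sub_apply, sub_apply]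
  ring

lemma contDiff_dbar {m n : WithTop ℕ∞} (hF : ContDiff ℝ n F) (hmn : m + 1 ≤ n) :
    ContDiff ℝ m (dbar F) := by
  have partial_contDiff (v : ℂ) : ContDiff ℝ m fun z ↦ fderiv ℝ F z v :=
    (hF.fderiv_right hmn).clm_apply contDiff_const
  exact ((partial_contDiff 1).add (contDiff_const.mul (partial_contDiff I))).div_const 2

lemma hasCompactSupport_dbar (hF : HasCompactSupport F) : HasCompactSupport (dbar F) :=
  (hF.fderiv ℝ).mono fun z hz hFz ↦ hz (by simp [dbar, hFz])

lemma fderiv_apply_I (F : ℂ → ℂ) (z : ℂ) :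
    fderiv ℝ F z I = I * fderiv ℝ F z 1 - 2 * I * dbar F z := by
  unfold dbar
  linear_combination fderiv ℝ F z I * I_mul_I

lemma dbar_fderiv_apply (hF : ContDiffAt ℝ 2 F z) (v : ℂ) :
    dbar (fun w ↦ fderiv ℝ F w v) z = fderiv ℝ (dbar F) z v := by
  have hF' : DifferentiableAt ℝ (fderiv ℝ F) z :=
    (hF.fderiv_right (m := 1) (by norm_num)).differentiableAt one_ne_zero
  have partial_hasFDerivAt (u : ℂ) :
      HasFDerivAt (fun w ↦ fderiv ℝ F w u) ((fderiv ℝ (fderiv ℝ F) z).flip u) z := by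
    simpa using hF'.hasFDerivAt.clm_apply (hasFDerivAt_const u z)
  have hdbar : HasFDerivAt (dbar F) _ z :=
    ((partial_hasFDerivAt 1).add ((partial_hasFDerivAt I).const_mul I)).mul_const (2⁻¹ : ℂ)
  have hsymm : IsSymmSndFDerivAt ℝ F z := hF.isSymmSndFDerivAt (by simp)
  rw [hdbar.fderiv, dbar, (partial_hasFDerivAt v).fderiv]
  simp only [ContinuousLinearMap.flip_apply, smul_apply,
    add_apply, smul_eq_mul, hsymm.eq v]
  ring

end CauchyRiemannOperator

section Flat

variable {E : Type*} [NormedAddCommGroup E]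

/-- Flatness along the real axis: `g` vanishes to infinite order at `ℝ`, uniformly on `ℂ`. -/
def IsFlat (g : ℂ → E) : Prop := ∀ N : ℕ, ∃ C : ℝ, ∀ z : ℂ, ‖g z‖ ≤ C * |z.im| ^ N

lemma nonneg_of_norm_le_mul_abs_im_pow {g : ℂ → E} {C : ℝ} {N : ℕ}
    (hC : ∀ z : ℂ, ‖g z‖ ≤ C * |z.im| ^ N) : 0 ≤ C := by
  simpa using (norm_nonneg (g I)).trans (hC I)

lemma IsFlat.sub {g h : ℂ → E} (hg : IsFlat g) (hh : IsFlat h) : IsFlat (g - h) := by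
  intro N
  obtain ⟨C, hC⟩ := hg N
  obtain ⟨D, hD⟩ := hh N
  refine ⟨C + D, fun z ↦ ?_⟩
  rw [add_mul]
  exact norm_sub_le_of_le (hC z) (hD z)

variable [NormedSpace ℝ E]

lemma IsFlat.hasFDerivAt_zero {g : ℂ → E} (hg : IsFlat g) {z : ℂ} (hz : z.im = 0) :
    HasFDerivAt g (0 : ℂ →L[ℝ] E) z := by
  obtain ⟨C, hC⟩ := hg 2
  have hC₀ := nonneg_of_norm_le_mul_abs_im_pow hC
  refine Asymptotics.IsBigO.hasFDerivAt (n := 2) ?_ one_lt_two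
  refine .of_bound C (.of_forall fun w ↦ (hC w).trans ?_)
  have him : |w.im| ≤ ‖w - z‖ := by simpa [hz] using abs_im_le_norm (w - z)
  rw [norm_pow, norm_norm]
  gcongr

lemma norm_sub_sub_fderiv_le {V : Type*} [NormedAddCommGroup V] [NormedSpace ℝ V] {g : V → E}
    (hg : Differentiable ℝ g) {K : NNReal} (hK : LipschitzWith K (fderiv ℝ g)) (x v : V) :
    ‖g (x + v) - g x - fderiv ℝ g x v‖ ≤ K * ‖v‖ ^ 2 := by
  have hbound : ∀ y ∈ Metric.closedBall x ‖v‖, ‖fderiv ℝ g y - fderiv ℝ g x‖ ≤ K * ‖v‖ :=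
    fun y hy ↦ (hK.norm_sub_le y x).trans (by gcongr; exact mem_closedBall_iff_norm.mp hy)
  have htaylor := (convex_closedBall x ‖v‖).norm_image_sub_le_of_norm_fderiv_le'
    (y := x + v) (fun y _ ↦ hg y) hbound (Metric.mem_closedBall_self (norm_nonneg v)) (by simp)
  simpa [pow_two, mul_assoc] using htaylor

/-- The first-order Taylor formula with step `|Im z| ^ N` loses only half of the vanishing order. -/
lemma IsFlat.fderiv_apply_one {g : ℂ → E} (hg : IsFlat g) (hsmooth : ContDiff ℝ 2 g)
    (hsupp : HasCompactSupport g) : IsFlat fun z ↦ fderiv ℝ g z 1 := by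
  intro N
  have hdiff : Differentiable ℝ g := hsmooth.differentiable two_ne_zero
  obtain ⟨K, hK⟩ := ContDiff.lipschitzWith_of_hasCompactSupport (hsupp.fderiv ℝ)
    (hsmooth.fderiv_right (m := 1) (by norm_num)) one_ne_zero
  obtain ⟨C, hC⟩ := hg (N + N)
  refine ⟨C + C + K, fun z ↦ ?_⟩
  rcases (pow_nonneg (abs_nonneg z.im) N).eq_or_lt with hstep | hstep
  · have hz : z.im = 0 := abs_eq_zero.mp (eq_zero_of_pow_eq_zero hstep.symm)
    simp [(hg.hasFDerivAt_zero hz).fderiv, ← hstep]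
  · set h : ℝ := |z.im| ^ N
    have hC' (w : ℂ) (hw : w.im = z.im) : ‖g w‖ ≤ C * (h * h) := by
      simpa only [hw, pow_add] using hC w
    have htaylor : ‖g (z + h) - g z - h • fderiv ℝ g z 1‖ ≤ K * (h * h) := by
      simpa [← map_smul, pow_two] using norm_sub_sub_fderiv_le hdiff hK z h
    refine le_of_mul_le_mul_left ?_ hstep
    calc h * ‖fderiv ℝ g z 1‖
        = ‖(g (z + h) - g z) - (g (z + h) - g z - h • fderiv ℝ g z 1)‖ := by
          rw [sub_sub_cancel, norm_smul, norm_of_nonneg hstep.le]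
      _ ≤ C * (h * h) + C * (h * h) + K * (h * h) :=
          norm_sub_le_of_le (norm_sub_le_of_le (hC' (z + h) (by simp)) (hC' z rfl)) htaylor
      _ = h * ((C + C + K) * h) := by ring

lemma norm_le_mul_abs_im_pow_succ {g : ℂ → E} (hg : Differentiable ℝ g)
    (hg₀ : ∀ x : ℝ, g x = 0) {C : ℝ} {N : ℕ}
    (hC : ∀ z : ℂ, ‖fderiv ℝ g z I‖ ≤ C * |z.im| ^ N) (z : ℂ) :
    ‖g z‖ ≤ C * |z.im| ^ (N + 1) := by
  have hC₀ := nonneg_of_norm_le_mul_abs_im_pow hC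
  have hderiv (t : ℝ) : HasDerivAt (fun s : ℝ ↦ g (z.re + s * (z.im * I)))
      (z.im • fderiv ℝ g (z.re + t * (z.im * I)) I) t := by
    have hline : HasDerivAt (fun s : ℝ ↦ z.re + (s : ℂ) * (z.im * I)) (z.im • I) t := by
      simpa using (ofRealCLM.hasDerivAt.mul_const (z.im * I)).const_add (z.re : ℂ)
    rw [← map_smul]
    exact (hg _).hasFDerivAt.comp_hasDerivAt t hline
  have hbound : ∀ t ∈ Set.Ico (0 : ℝ) 1,
      ‖z.im • fderiv ℝ g (z.re + t * (z.im * I)) I‖ ≤ C * |z.im| ^ (N + 1) := by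
    rintro t ⟨ht₀, ht₁⟩
    have him : |(z.re + t * (z.im * I) : ℂ).im| ≤ |z.im| := by
      simpa [abs_mul, abs_of_nonneg ht₀] using mul_le_of_le_one_left (abs_nonneg z.im) ht₁.le
    calc ‖z.im • fderiv ℝ g (z.re + t * (z.im * I)) I‖
        = |z.im| * ‖fderiv ℝ g (z.re + t * (z.im * I)) I‖ := norm_smul _ _
      _ ≤ |z.im| * (C * |z.im| ^ N) := by gcongr; exact (hC _).trans (by gcongr)
      _ = C * |z.im| ^ (N + 1) := by ring
  simpa [hg₀, re_add_im] using norm_image_sub_le_of_norm_deriv_le_segment_01'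
    (fun t _ ↦ (hderiv t).hasDerivWithinAt) hbound

end Flat

section AlmostHolomorphicExtension

variable {f g : ℝ → ℂ} {F G : ℂ → ℂ}

lemma IsAHExt.differentiable (hF : IsAHExt f F) : Differentiable ℝ F :=
  hF.1.differentiable (by simp)

lemma IsAHExt.continuous_dbar (hF : IsAHExt f F) : Continuous (dbar F) :=
  (contDiff_dbar (m := 0) hF.1 (by simp)).continuous

lemma IsAHExt.sub (hF : IsAHExt f F) (hG : IsAHExt g G) : IsAHExt (f - g) (F - G) := by
  have hdbar := dbar_sub hF.differentiable hG.differentiable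
  obtain ⟨hF_smooth, hF_supp, hF_ext, hF_dbar⟩ := hF
  obtain ⟨hG_smooth, hG_supp, hG_ext, hG_dbar⟩ := hG
  refine ⟨hF_smooth.sub hG_smooth, hF_supp.sub hG_supp, fun x ↦ by simp [hF_ext, hG_ext], ?_⟩
  rw [hdbar]
  exact IsFlat.sub hF_dbar hG_dbar

lemma deriv_comp_ofReal_eq_fderiv_apply_one {E : Type*} [NormedAddCommGroup E] [NormedSpace ℝ E]
    {u : ℂ → E} {x : ℝ} (hu : DifferentiableAt ℝ u x) :
    deriv (fun t : ℝ ↦ u t) x = fderiv ℝ u x 1 :=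
  (hu.hasFDerivAt.comp_hasDerivAt x (hasDerivAt_id x).ofReal_comp).deriv

lemma IsAHExt.fderiv_apply_one (hF : IsAHExt f F) :
    IsAHExt (deriv f) fun z ↦ fderiv ℝ F z 1 := by
  have hdiff := hF.differentiable
  obtain ⟨hsmooth, hsupp, hext, hdbar⟩ := hF
  have hcomm : (dbar fun z ↦ fderiv ℝ F z 1) = fun z ↦ fderiv ℝ (dbar F) z 1 :=
    funext fun z ↦ dbar_fderiv_apply (contDiff_infty.mp hsmooth 2).contDiffAt 1
  refine ⟨(hsmooth.fderiv_right (by simp)).clm_apply contDiff_const,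
    hsupp.fderiv_apply (𝕜 := ℝ) 1, fun x ↦ ?_, ?_⟩
  · rw [← funext hext, deriv_comp_ofReal_eq_fderiv_apply_one (hdiff x)]
  · rw [hcomm]
    exact IsFlat.fderiv_apply_one hdbar (contDiff_dbar (contDiff_infty.mp hsmooth 3) (by norm_num))
      (hasCompactSupport_dbar hsupp)

theorem IsAHExt.isFlat {H : ℂ → ℂ} (hH : IsAHExt 0 H) : IsFlat H := by
  intro N
  induction N generalizing H with
  | zero => simpa using hH.2.1.exists_bound_of_continuous hH.1.continuous
  | succ N ih =>
    have hH' : IsAHExt 0 fun z ↦ fderiv ℝ H z 1 := by simpa using hH.fderiv_apply_one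
    obtain ⟨C, hC⟩ := ih hH'
    obtain ⟨D, hD⟩ := hH.2.2.2 N
    refine ⟨C + 2 * D, norm_le_mul_abs_im_pow_succ hH.differentiable hH.2.2.1 fun z ↦ ?_⟩
    calc ‖fderiv ℝ H z I‖ = ‖I * fderiv ℝ H z 1 - 2 * I * dbar H z‖ := by rw [fderiv_apply_I]
      _ ≤ ‖fderiv ℝ H z 1‖ + 2 * ‖dbar H z‖ := by
          simpa using norm_sub_le (I * fderiv ℝ H z 1) (2 * I * dbar H z)
      _ ≤ C * |z.im| ^ N + 2 * (D * |z.im| ^ N) := by gcongr; exacts [hC z, hD z]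
      _ = (C + 2 * D) * |z.im| ^ N := by ring

end AlmostHolomorphicExtension

section Green

open Function Set

variable {E : Type*} [NormedAddCommGroup E]

lemma integral_eq_integral_integral_re_im [NormedSpace ℝ E] {g : ℂ → E} (hg : Integrable g) :
    ∫ z, g z = ∫ x : ℝ, ∫ y : ℝ, g (x + y * I) := by
  have hpres := volume_preserving_equiv_real_prod.symm
  have hemb := measurableEquivRealProd.symm.measurableEmbedding
  have hprod : Integrable (fun p ↦ g (measurableEquivRealProd.symm p)) (volume.prod volume) :=
    (hpres.integrable_comp_emb hemb).mpr hg
  rw [← hpres.integral_comp hemb, Measure.volume_eq_prod, integral_prod _ hprod]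
  simp only [measurableEquivRealProd_symm_apply, mk_eq_add_mul_I]

lemma integral_eq_intervalIntegral_of_support_subset [NormedSpace ℝ E] {g : ℂ → E}
    (hg : Integrable g) {a b c d : ℝ} (hsupp : support g ⊆ Ioc a b ×ℂ Ioc c d) :
    ∫ z, g z = ∫ x in a..b, ∫ y in c..d, g (x + y * I) := by
  have hinner (x : ℝ) : ∫ y in c..d, g (x + y * I) = ∫ y : ℝ, g (x + y * I) :=
    intervalIntegral.integral_eq_integral_of_support_subset fun y (hy : g (x + y * I) ≠ 0) ↦ by
      simpa using (hsupp hy).2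
  have houter : support (fun x : ℝ ↦ ∫ y : ℝ, g (x + y * I)) ⊆ Ioc a b := by
    intro x hx
    by_contra hxab
    refine hx (integral_eq_zero_of_ae (.of_forall fun y ↦ ?_))
    by_contra hy
    exact hxab (by simpa using (hsupp hy).1)
  simp_rw [hinner, intervalIntegral.integral_eq_integral_of_support_subset houter]
  exact integral_eq_integral_integral_re_im hg

/-- The integrand is `2i ∂u/∂z̄`. -/
lemma integral_I_smul_fderiv_one_sub_fderiv_I_eq_zero [NormedSpace ℂ E] {u : ℂ → E}
    (hu : Differentiable ℝ u) (hsupp : HasCompactSupport u)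
    (hint : Integrable fun z ↦ I • fderiv ℝ u z 1 - fderiv ℝ u z I) :
    ∫ z, (I • fderiv ℝ u z 1 - fderiv ℝ u z I) = 0 := by
  obtain ⟨R, hR₀, hR⟩ := hsupp.isCompact.isBounded.exists_pos_norm_lt
  have hsquare : support (fun z ↦ I • fderiv ℝ u z 1 - fderiv ℝ u z I) ⊆
      Ioc (-R) R ×ℂ Ioc (-R) R := by
    intro z hz
    have hzu : z ∈ tsupport u := by
      by_contra hzu
      exact hz (by simp [fderiv_of_notMem_tsupport ℝ hzu])
    have hre := abs_lt.mp ((abs_re_le_norm z).trans_lt (hR z hzu))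
    have him := abs_lt.mp ((abs_im_le_norm z).trans_lt (hR z hzu))
    exact ⟨⟨hre.1, hre.2.le⟩, him.1, him.2.le⟩
  have hboundary (z : ℂ) (hz : |z.re| = R ∨ |z.im| = R) : u z = 0 := by
    refine image_eq_zero_of_notMem_tsupport fun hzu ↦ ?_
    rcases hz with hz | hz
    · exact ((abs_re_le_norm z).trans_lt (hR z hzu)).ne hz
    · exact ((abs_im_le_norm z).trans_lt (hR z hzu)).ne hz
  have hgreen := integral_boundary_rect_of_differentiableOn_real u ⟨-R, -R⟩ ⟨R, R⟩
    hu.differentiableOn hint.integrableOn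
  rw [integral_eq_intervalIntegral_of_support_subset hint hsquare, ← hgreen]
  simp [hboundary, abs_of_pos hR₀]

end Green

section Temperate

variable {E : Type*} [NormedAddCommGroup E]

/-- Locally temperate growth of `S` near the real axis; `TemperateResolventLoc P` is this condition
on `S = res P`. -/
def IsLocallyTemperate (S : ℂ → E) : Prop :=
  ∀ R > (0 : ℝ), ∃ C N : ℝ, 0 ≤ C ∧ 0 ≤ N ∧ ∀ z : ℂ, z.im ≠ 0 → ‖z‖ ≤ R →
    ‖S z‖ ≤ C * |z.im| ^ (-N)

lemma IsLocallyTemperate.exists_pow_mul_norm_le {S : ℂ → E} (hS : IsLocallyTemperate S) {R : ℝ}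
    (hR : 0 < R) :
    ∃ C : ℝ, 0 ≤ C ∧ ∃ n : ℕ, ∀ z : ℂ, z.im ≠ 0 → ‖z‖ ≤ R → |z.im| ^ n * ‖S z‖ ≤ C := by
  obtain ⟨C, N, hC₀, -, hC⟩ := hS R hR
  refine ⟨C * R ^ (⌈N⌉₊ - N), by positivity, ⌈N⌉₊, fun z hz hzR ↦ ?_⟩
  have him : 0 < |z.im| := abs_pos.mpr hz
  have himR : |z.im| ≤ R := (abs_im_le_norm z).trans hzR
  have hN : 0 ≤ ⌈N⌉₊ - N := sub_nonneg.mpr (Nat.le_ceil N)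
  calc |z.im| ^ ⌈N⌉₊ * ‖S z‖ ≤ |z.im| ^ ⌈N⌉₊ * (C * |z.im| ^ (-N)) := by gcongr; exact hC z hz hzR
    _ = C * |z.im| ^ (⌈N⌉₊ - N) := by
        rw [sub_eq_add_neg, rpow_add him, rpow_natCast]
        ring
    _ ≤ C * R ^ (⌈N⌉₊ - N) := by gcongr

variable [NormedSpace ℂ E]

/-- The product `A • S` off the real axis, extended by `0` to the real axis. The integrand defining
`f(P)` is `smulOffReal (dbar F) (res P)`. -/
def smulOffReal (A : ℂ → ℂ) (S : ℂ → E) (z : ℂ) : E := if z.im = 0 then 0 else A z • S z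

variable {A : ℂ → ℂ} {S : ℂ → E}

lemma smulOffReal_sub_left (A A' : ℂ → ℂ) (S : ℂ → E) :
    smulOffReal (A - A') S = smulOffReal A S - smulOffReal A' S := by
  funext z
  by_cases hz : z.im = 0 <;> simp [smulOffReal, hz, sub_smul]

lemma hasCompactSupport_smulOffReal (hA : HasCompactSupport A) :
    HasCompactSupport (smulOffReal A S) :=
  hA.mono fun z hz hAz ↦ hz (by simp [smulOffReal, hAz])

lemma isOpen_im_ne_zero : IsOpen {z : ℂ | z.im ≠ 0} := isOpen_ne_fun continuous_im continuous_const

lemma smulOffReal_eventuallyEq {z : ℂ} (hz : z.im ≠ 0) :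
    smulOffReal A S =ᶠ[nhds z] fun w ↦ A w • S w := by
  filter_upwards [isOpen_im_ne_zero.mem_nhds hz] with w hw
  exact if_neg hw

lemma IsFlat.isFlat_smulOffReal (hA : IsFlat A) (hsupp : HasCompactSupport A)
    (hS : IsLocallyTemperate S) : IsFlat (smulOffReal A S) := by
  intro N
  obtain ⟨R, hR₀, hR⟩ := hsupp.isCompact.isBounded.exists_pos_norm_le
  obtain ⟨C, hC₀, n, hC⟩ := hS.exists_pow_mul_norm_le hR₀
  obtain ⟨D, hD⟩ := hA (N + n)
  have hD₀ := nonneg_of_norm_le_mul_abs_im_pow hD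
  refine ⟨D * C, fun z ↦ ?_⟩
  by_cases hz : z.im = 0 ∨ A z = 0
  · have hzero : smulOffReal A S z = 0 := by
      rcases hz with hz | hz <;> simp [smulOffReal, hz]
    rw [hzero, norm_zero]
    positivity
  obtain ⟨him, hAz⟩ := not_or.mp hz
  calc ‖smulOffReal A S z‖ = ‖A z‖ * ‖S z‖ := by
        rw [smulOffReal, if_neg him, norm_smul]
    _ ≤ D * |z.im| ^ (N + n) * ‖S z‖ := by gcongr; exact hD z
    _ = D * |z.im| ^ N * (|z.im| ^ n * ‖S z‖) := by ring
    _ ≤ D * |z.im| ^ N * C := by gcongr; exact hC z him (hR z (subset_tsupport A hAz))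
    _ = D * C * |z.im| ^ N := by ring

lemma integrable_smulOffReal (hcont : Continuous A) (hsupp : HasCompactSupport A) (hA : IsFlat A)
    (hS : ContinuousOn S {z | z.im ≠ 0}) (hS' : IsLocallyTemperate S) :
    Integrable (smulOffReal A S) := by
  refine Continuous.integrable_of_hasCompactSupport ?_ (hasCompactSupport_smulOffReal hsupp)
  refine continuous_iff_continuousAt.mpr fun z ↦ ?_
  by_cases hz : z.im = 0
  · exact ((hA.isFlat_smulOffReal hsupp hS').hasFDerivAt_zero hz).continuousAt
  · exact (hcont.continuousAt.smul (hS.continuousAt (isOpen_im_ne_zero.mem_nhds hz))).congr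
      (smulOffReal_eventuallyEq hz).symm

variable {H : ℂ → ℂ}

lemma hasFDerivAt_smulOffReal {z : ℂ} (hz : z.im ≠ 0) (hH : DifferentiableAt ℝ H z)
    (hS : DifferentiableAt ℂ S z) :
    HasFDerivAt (smulOffReal H S)
      (H z • (fderiv ℂ S z).restrictScalars ℝ + (fderiv ℝ H z).smulRight (S z)) z :=
  (hH.hasFDerivAt.smul (hS.hasFDerivAt.restrictScalars ℝ)).congr_of_eventuallyEq
    (smulOffReal_eventuallyEq hz)

/-- The product rule `∂(H S)/∂z̄ = (∂H/∂z̄) S`, multiplied by `2i`. -/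
lemma I_smul_fderiv_one_sub_fderiv_I_smulOffReal (hH : Differentiable ℝ H)
    (hS : DifferentiableOn ℂ S {z | z.im ≠ 0}) (hflat : IsFlat (smulOffReal H S)) (z : ℂ) :
    I • fderiv ℝ (smulOffReal H S) z 1 - fderiv ℝ (smulOffReal H S) z I =
      (2 * I) • smulOffReal (dbar H) S z := by
  by_cases hz : z.im = 0
  · simp [(hflat.hasFDerivAt_zero hz).fderiv, smulOffReal, hz]
  · have hSz := hS.differentiableAt (isOpen_im_ne_zero.mem_nhds hz)
    have hSI : fderiv ℂ S z I = I • fderiv ℂ S z 1 := by rw [← map_smul, smul_eq_mul, mul_one]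
    rw [(hasFDerivAt_smulOffReal hz (hH z) hSz).fderiv, smulOffReal, if_neg hz]
    simp only [add_apply, smul_apply, ContinuousLinearMap.coe_restrictScalars',
      ContinuousLinearMap.smulRight_apply, smul_add, hSI, fderiv_apply_I]
    module

lemma IsAHExt.integrable_smulOffReal_dbar {f : ℝ → ℂ} {F : ℂ → ℂ} (hF : IsAHExt f F)
    (hS : ContinuousOn S {z | z.im ≠ 0}) (hS' : IsLocallyTemperate S) :
    Integrable (smulOffReal (dbar F) S) :=
  integrable_smulOffReal hF.continuous_dbar (hasCompactSupport_dbar hF.2.1) hF.2.2.2 hS hS'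

theorem IsAHExt.integral_smulOffReal_dbar_eq_zero (hH : IsAHExt 0 H)
    (hS : DifferentiableOn ℂ S {z | z.im ≠ 0}) (hS' : IsLocallyTemperate S) :
    ∫ z, smulOffReal (dbar H) S z = 0 := by
  have hflat : IsFlat (smulOffReal H S) := hH.isFlat.isFlat_smulOffReal hH.2.1 hS'
  have hdiff : Differentiable ℝ (smulOffReal H S) := by
    intro z
    by_cases hz : z.im = 0
    · exact (hflat.hasFDerivAt_zero hz).differentiableAt
    · exact (hasFDerivAt_smulOffReal hz (hH.differentiable z)
        (hS.differentiableAt (isOpen_im_ne_zero.mem_nhds hz))).differentiableAt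
  have hproduct := I_smul_fderiv_one_sub_fderiv_I_smulOffReal hH.differentiable hS hflat
  have hint : Integrable fun z ↦ (2 * I) • smulOffReal (dbar H) S z :=
    (hH.integrable_smulOffReal_dbar hS.continuousOn hS').smul (2 * I)
  have hgreen := integral_I_smul_fderiv_one_sub_fderiv_I_eq_zero hdiff
    (hasCompactSupport_smulOffReal hH.2.1) (by simpa only [hproduct] using hint)
  simpa [hproduct, integral_smul] using hgreen

end Temperate

section Resolvent

variable {B : Type*} [NormedAddCommGroup B] [NormedSpace ℂ B]

lemma res_eq_resolvent (P : B →L[ℂ] B) : res P = resolvent P := by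
  funext z
  simp [res, resolvent, Algebra.algebraMap_eq_smul_one]

lemma differentiableOn_res [CompleteSpace B] {P : B →L[ℂ] B} (hP : RealSpectrum P) :
    DifferentiableOn ℂ (res P) {z | z.im ≠ 0} := by
  intro z hz
  have hzP : z ∈ resolventSet ℂ P := not_not.mp (mt (hP z) hz)
  rw [res_eq_resolvent]
  exact (spectrum.hasDerivAt_resolvent_const_left hzP).differentiableAt.differentiableWithinAt

end Resolvent

theorem calculus_well_defined_general {E : Type*} [NormedAddCommGroup E] [NormedSpace ℂ E]
    [CompleteSpace E] {S : ℂ → E}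
    (hS : DifferentiableOn ℂ S {z | z.im ≠ 0}) (hS' : IsLocallyTemperate S)
    {f : ℝ → ℂ} {F G : ℂ → ℂ} (hF : IsAHExt f F) (hG : IsAHExt f G) :
    Integrable (smulOffReal (dbar F) S) ∧ Integrable (smulOffReal (dbar G) S) ∧
      ∫ z, smulOffReal (dbar F) S z = ∫ z, smulOffReal (dbar G) S z := by
  have hF_int := hF.integrable_smulOffReal_dbar hS.continuousOn hS'
  have hG_int := hG.integrable_smulOffReal_dbar hS.continuousOn hS'
  refine ⟨hF_int, hG_int, ?_⟩
  have hFG : IsAHExt 0 (F - G) := by simpa using hF.sub hG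
  have hzero := hFG.integral_smulOffReal_dbar_eq_zero hS hS'
  rw [dbar_sub hF.differentiable hG.differentiable, smulOffReal_sub_left,
    integral_sub' hF_int hG_int] at hzero
  exact sub_eq_zero.mp hzero

/-- Well-definedness of `f(P)` in Definition 1 (case of one operator):
for two almost holomorphic extensions `F`, `G` of `f ∈ C_0^∞(ℝ)` the integrands
are Bochner integrable on `ℂ` and the corresponding integrals agree. -/
theorem calculus_well_defined {B : Type*} [NormedAddCommGroup B] [NormedSpace ℂ B]
    [CompleteSpace B] (P : B →L[ℂ] B)
    (hspec : RealSpectrum P) (hres : TemperateResolventLoc P)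
    (f : ℝ → ℂ) (hf_smooth : ContDiff ℝ (⊤ : ℕ∞) f) (hf_supp : HasCompactSupport f)
    (F G : ℂ → ℂ) (hF : IsAHExt f F) (hG : IsAHExt f G) :
    Integrable (fun z : ℂ => if z.im = 0 then 0 else dbar F z • res P z) ∧
    Integrable (fun z : ℂ => if z.im = 0 then 0 else dbar G z • res P z) ∧
    (-(1/(π:ℂ))) • ∫ z : ℂ, (if z.im = 0 then 0 else dbar F z • res P z) =
      (-(1/(π:ℂ))) • ∫ z : ℂ, (if z.im = 0 then 0 else dbar G z • res P z) := by
  obtain ⟨hF_int, hG_int, heq⟩ :=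
    calculus_well_defined_general (differentiableOn_res hspec) hres hF hG
  exact ⟨hF_int, hG_int, congrArg _ heq⟩
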